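/- Let ω be a nonnegative integrable function on [0,1) belonging to the class D̂ (i.e. ŵ(r) ≤ C·ŵ((1+r)/2) for some C ≥ 1 and all r ∈ [0,1)). Then there exist constants c₁, c₂ > 0 such that for all 0 ≤ s, t < 1: c₁·(1 + ∫_0^{st} dx/(ŵ(x)(1-x))) ≤ 1/(2ω₁) + (1/t)∫_0^t Σ_{n≥1} s^n x^n/(2ω_{2n+1}) dx ≤ c₂·(1 + ∫_0^{st} dx/(ŵ(x)(1-x))), where ω_{2n+1} = ∫_0^1 r^{2n+1}ω(r)dr (with the middle expression interpreted as 1/(2ω₁) when t = 0). -/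

import Mathlib

open MeasureTheory Set

/-- The tail integral of a radial weight. -/
noncomputable def tl (ω : ℝ → ℝ) (r : ℝ) : ℝ := ∫ s in r..1, ω s

/-- The (real-parameter) moments of a radial weight. -/
noncomputable def momR (ω : ℝ → ℝ) (x : ℝ) : ℝ := ∫ r in (0:ℝ)..1, r ^ x * ω r

/-- The restriction to `[0,1)` of the kernel `K^ω_s(t) = (1/t)∫_0^t B^ω_s(x) dx`,
interpreted as `1/(2ω₁)` when `t = 0`. -/
noncomputable def Kker (ω : ℝ → ℝ) (s t : ℝ) : ℝ :=
  if t = 0 then 1 / (2 * momR ω 1)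
  else 1 / (2 * momR ω 1) +
    (1 / t) * ∫ x in (0:ℝ)..t, ∑' n : ℕ, (s ^ (n + 1) * x ^ (n + 1)) / (2 * momR ω (2 * (n:ℝ) + 3))

/-!
Write `T` for the tail `tl ω` and `B(y) = ∑ yⁿ / (2 ω_{2n+1})`. The substitution `x = t u` gives
`K^ω_s(t) = ∫₀¹ B(s t u) du`, so everything reduces to the pointwise estimate
`B(x) ≍ g(x) := 1 / (T(x) (1 - x))` on `[0, 1)` and to the fact that the mean `∫₀¹ g(y u) du` of an
increasing positive function is comparable to `1 + ∫₀^y g`.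

The upper bound for `B` compares it with a geometric series through `r^q T(r) ≤ ω_q`. For the lower
bound, doubling says that the tail of the weight is at most `C` times the tail of its image under
`u ↦ 2u - 1`; since `2u - 1 ≤ u²`, the layer-cake formula yields `ω_p ≤ C ω_{2p}`. This forces
`ω_q ≤ 2 T(x)` as soon as `C x^{q/2} ≤ 1/2`, and the geometric series of these late terms is already
of size `g(x)`.
-/

open scoped ENNReal

section LayerCake

theorem lintegral_rpow_le_of_measure_Ici_le {μ ν : Measure ℝ} {c : ℝ≥0∞} {p : ℝ} (hp : 0 < p)
    (h : ∀ r > 0, μ (Ici r) ≤ c * ν (Ici r)) :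
    ∫⁻ x, ENNReal.ofReal (max x 0 ^ p) ∂μ ≤ c * ∫⁻ x, ENNReal.ofReal (max x 0 ^ p) ∂ν := by
  have layer_cake (ρ : Measure ℝ) : ∫⁻ x, ENNReal.ofReal (max x 0 ^ p) ∂ρ =
      ENNReal.ofReal p * ∫⁻ r in Ioi 0, ρ (Ici r) * ENNReal.ofReal (r ^ (p - 1)) := by
    rw [lintegral_rpow_eq_lintegral_meas_le_mul ρ (.of_forall fun x => le_max_right x 0)
      (by fun_prop) hp]
    congr 1
    refine setLIntegral_congr_fun measurableSet_Ioi fun r (hr : 0 < r) => ?_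
    have superlevel_eq : {x | r ≤ max x 0} = Ici r := by
      ext x
      simp [hr.not_ge]
    rw [superlevel_eq]
  have measurable_tail : Measurable fun r => ν (Ici r) :=
    Antitone.measurable fun _ _ hrs => measure_mono (Ici_subset_Ici.2 hrs)
  have measurable_integrand : Measurable fun r => ν (Ici r) * ENNReal.ofReal (r ^ (p - 1)) :=
    measurable_tail.mul (by fun_prop)
  rw [layer_cake μ, layer_cake ν, mul_left_comm, ← lintegral_const_mul c measurable_integrand]
  gcongr ENNReal.ofReal p * ?_
  refine setLIntegral_mono' measurableSet_Ioi fun r hr => ?_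
  rw [← mul_assoc]
  gcongr
  exact h r hr

theorem lintegral_rpow_le_of_measure_Ici_doubling {μ : Measure ℝ} {c : ℝ≥0∞} {p : ℝ} (hp : 0 < p)
    (h : ∀ r > 0, μ (Ici r) ≤ c * μ (Ici ((1 + r) / 2))) :
    ∫⁻ x, ENNReal.ofReal (max x 0 ^ p) ∂μ ≤ c * ∫⁻ x, ENNReal.ofReal ((x ^ 2) ^ p) ∂μ := by
  have map_Ici (r : ℝ) : μ.map (fun x => 2 * x - 1) (Ici r) = μ (Ici ((1 + r) / 2)) := by
    rw [Measure.map_apply (by fun_prop) measurableSet_Ici]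
    congr 1
    ext x
    simp only [mem_preimage, mem_Ici]
    constructor <;> intro _ <;> linarith
  calc ∫⁻ x, ENNReal.ofReal (max x 0 ^ p) ∂μ
      ≤ c * ∫⁻ x, ENNReal.ofReal (max x 0 ^ p) ∂μ.map (fun x => 2 * x - 1) :=
        lintegral_rpow_le_of_measure_Ici_le hp fun r hr => (h r hr).trans_eq (by rw [map_Ici])
    _ = c * ∫⁻ x, ENNReal.ofReal (max (2 * x - 1) 0 ^ p) ∂μ := by
        rw [lintegral_map (by fun_prop) (by fun_prop)]
    _ ≤ c * ∫⁻ x, ENNReal.ofReal ((x ^ 2) ^ p) ∂μ := by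
        gcongr with x
        exact max_le (by linarith [sq_nonneg (x - 1)]) (sq_nonneg x)

end LayerCake

section MomentsOnUnitInterval

variable {μ : Measure ℝ} [IsFiniteMeasure μ] {p q r x C : ℝ}

theorem integrable_rpow_of_ae_mem_Ico (hμ : ∀ᵐ u ∂μ, u ∈ Ico (0 : ℝ) 1) (hp : 0 ≤ p) :
    Integrable (fun u : ℝ => u ^ p) μ := by
  refine Integrable.of_bound (by fun_prop) 1 ?_
  filter_upwards [hμ] with u hu
  rw [Real.norm_of_nonneg (Real.rpow_nonneg hu.1 p)]
  exact Real.rpow_le_one hu.1 hu.2.le hp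

theorem integral_rpow_anti (hμ : ∀ᵐ u ∂μ, u ∈ Ico (0 : ℝ) 1) (hp : 0 ≤ p) (hpq : p ≤ q) :
    ∫ u, u ^ q ∂μ ≤ ∫ u, u ^ p ∂μ := by
  refine integral_mono_ae (integrable_rpow_of_ae_mem_Ico hμ (hp.trans hpq))
    (integrable_rpow_of_ae_mem_Ico hμ hp) ?_
  filter_upwards [hμ] with u hu
  exact Real.rpow_le_rpow_of_exponent_ge_of_imp hu.1 hu.2.le hpq fun _ hq => by linarith

theorem rpow_mul_measureReal_Ici_le_integral_rpow (hμ : ∀ᵐ u ∂μ, u ∈ Ico (0 : ℝ) 1) (hq : 0 ≤ q)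
    (hr : 0 ≤ r) : r ^ q * μ.real (Ici r) ≤ ∫ u, u ^ q ∂μ := by
  have nonneg : 0 ≤ᵐ[μ] fun u : ℝ => u ^ q := by
    filter_upwards [hμ] with u hu using Real.rpow_nonneg hu.1 q
  calc r ^ q * μ.real (Ici r) ≤ r ^ q * μ.real {u | r ^ q ≤ u ^ q} := by
        gcongr
        · exact measure_ne_top _ _
        · exact fun u hu => Real.rpow_le_rpow hr hu hq
    _ ≤ ∫ u, u ^ q ∂μ :=
        mul_meas_ge_le_integral_of_nonneg nonneg (integrable_rpow_of_ae_mem_Ico hμ hq) _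

theorem integral_rpow_two_mul_le_add (hμ : ∀ᵐ u ∂μ, u ∈ Ico (0 : ℝ) 1) (hp : 0 ≤ p)
    (hx : 0 ≤ x) : ∫ u, u ^ (2 * p) ∂μ ≤ μ.real (Ici x) + x ^ p * ∫ u, u ^ p ∂μ := by
  have integrable_indicator : Integrable ((Ici x).indicator (1 : ℝ → ℝ)) μ :=
    (integrable_const (1 : ℝ)).indicator measurableSet_Ici
  have integrable_mul : Integrable (fun u => x ^ p * u ^ p) μ :=
    (integrable_rpow_of_ae_mem_Ico hμ hp).const_mul _
  rw [← integral_indicator_one measurableSet_Ici, ← integral_const_mul,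
    ← integral_add integrable_indicator integrable_mul]
  refine integral_mono_ae (integrable_rpow_of_ae_mem_Ico hμ (by positivity))
    (integrable_indicator.add integrable_mul) ?_
  filter_upwards [hμ] with u hu
  have hup : 0 ≤ u ^ p := Real.rpow_nonneg hu.1 p
  rcases le_or_gt x u with hxu | hux
  · rw [indicator_of_mem (mem_Ici.2 hxu), Pi.one_apply]
    exact (Real.rpow_le_one hu.1 hu.2.le (by positivity)).trans
      (le_add_of_nonneg_right (by positivity))
  · rw [indicator_of_notMem (by simpa using hux), zero_add, two_mul,
      Real.rpow_add_of_nonneg hu.1 hp hp]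
    gcongr
    exact hu.1

theorem integral_rpow_le_mul_integral_rpow_two_mul (hμ : ∀ᵐ u ∂μ, u ∈ Ico (0 : ℝ) 1)
    (hp : 0 < p) (hC : 0 ≤ C)
    (hd : ∀ r ∈ Ico (0 : ℝ) 1, μ.real (Ici r) ≤ C * μ.real (Ici ((1 + r) / 2))) :
    ∫ u, u ^ p ∂μ ≤ C * ∫ u, u ^ (2 * p) ∂μ := by
  have doubling (r : ℝ) (hr : 0 < r) : μ (Ici r) ≤ ENNReal.ofReal C * μ (Ici ((1 + r) / 2)) := by
    rcases lt_or_ge r 1 with hr1 | hr1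
    · rw [← ofReal_measureReal, ← ofReal_measureReal, ← ENNReal.ofReal_mul hC]
      exact ENNReal.ofReal_le_ofReal (hd r ⟨hr.le, hr1⟩)
    · have tail_eq_zero : μ (Ici r) = 0 :=
        measure_eq_zero_iff_ae_notMem.2 (hμ.mono fun u hu hru => (hr1.trans hru).not_gt hu.2)
      simp [tail_eq_zero]
  have ofReal_moment {s : ℝ} (hs : 0 ≤ s) :
      ENNReal.ofReal (∫ u, u ^ s ∂μ) = ∫⁻ u, ENNReal.ofReal (u ^ s) ∂μ :=
    ofReal_integral_eq_lintegral_ofReal (integrable_rpow_of_ae_mem_Ico hμ hs)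
      (hμ.mono fun u hu => Real.rpow_nonneg hu.1 s)
  have moment_nonneg : 0 ≤ ∫ u, u ^ (2 * p) ∂μ :=
    integral_nonneg_of_ae (hμ.mono fun u hu => Real.rpow_nonneg hu.1 _)
  rw [← ENNReal.ofReal_le_ofReal_iff (mul_nonneg hC moment_nonneg), ENNReal.ofReal_mul hC,
    ofReal_moment hp.le, ofReal_moment (by positivity)]
  calc ∫⁻ u, ENNReal.ofReal (u ^ p) ∂μ
      = ∫⁻ u, ENNReal.ofReal (max u 0 ^ p) ∂μ :=
        lintegral_congr_ae (hμ.mono fun u hu => by simp only [max_eq_left hu.1])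
    _ ≤ ENNReal.ofReal C * ∫⁻ u, ENNReal.ofReal ((u ^ 2) ^ p) ∂μ :=
        lintegral_rpow_le_of_measure_Ici_doubling hp doubling
    _ = ENNReal.ofReal C * ∫⁻ u, ENNReal.ofReal (u ^ (2 * p)) ∂μ := by
        congr 1
        refine lintegral_congr_ae (hμ.mono fun u hu => ?_)
        simp only [Real.rpow_mul hu.1, Real.rpow_two]

theorem integral_rpow_two_mul_le_two_mul_measureReal_Ici (hμ : ∀ᵐ u ∂μ, u ∈ Ico (0 : ℝ) 1)
    (hp : 0 < p) (hC : 0 ≤ C)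
    (hd : ∀ r ∈ Ico (0 : ℝ) 1, μ.real (Ici r) ≤ C * μ.real (Ici ((1 + r) / 2)))
    (hx : 0 ≤ x) (hxp : C * x ^ p ≤ 1 / 2) :
    ∫ u, u ^ (2 * p) ∂μ ≤ 2 * μ.real (Ici x) := by
  have moment_nonneg : 0 ≤ ∫ u, u ^ (2 * p) ∂μ :=
    integral_nonneg_of_ae (hμ.mono fun u hu => Real.rpow_nonneg hu.1 _)
  have absorb : ∫ u, u ^ (2 * p) ∂μ ≤ μ.real (Ici x) + 1 / 2 * ∫ u, u ^ (2 * p) ∂μ :=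
    calc ∫ u, u ^ (2 * p) ∂μ ≤ μ.real (Ici x) + x ^ p * ∫ u, u ^ p ∂μ :=
          integral_rpow_two_mul_le_add hμ hp.le hx
      _ ≤ μ.real (Ici x) + x ^ p * (C * ∫ u, u ^ (2 * p) ∂μ) := by
          gcongr
          exact integral_rpow_le_mul_integral_rpow_two_mul hμ hp hC hd
      _ = μ.real (Ici x) + C * x ^ p * ∫ u, u ^ (2 * p) ∂μ := by ring
      _ ≤ μ.real (Ici x) + 1 / 2 * ∫ u, u ^ (2 * p) ∂μ := by gcongr
  linarith

end MomentsOnUnitInterval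

section WeightMeasure

/-- The measure `ω(r) dr` on `[0, 1)`, whose tails and moments are `tl ω` and `momR ω`. Values of
`ω` outside `[0, 1)` are discarded and negative values are replaced by `0`. -/
noncomputable def weightMeasure (ω : ℝ → ℝ) : Measure ℝ :=
  (volume.restrict (Ico 0 1)).withDensity fun r => ENNReal.ofReal (ω r)

theorem ae_weightMeasure_mem_Ico (ω : ℝ → ℝ) : ∀ᵐ u ∂weightMeasure ω, u ∈ Ico (0 : ℝ) 1 :=
  withDensity_absolutelyContinuous _ _ (ae_restrict_mem measurableSet_Ico)

variable {ω : ℝ → ℝ} {q r : ℝ}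

theorem isFiniteMeasure_weightMeasure (hint : IntegrableOn ω (Ico (0 : ℝ) 1)) :
    IsFiniteMeasure (weightMeasure ω) :=
  isFiniteMeasure_withDensity_ofReal hint.2

theorem integral_weightMeasure (hnn : ∀ t ∈ Ico (0 : ℝ) 1, 0 ≤ ω t)
    (hint : IntegrableOn ω (Ico (0 : ℝ) 1)) (f : ℝ → ℝ) :
    ∫ u, f u ∂weightMeasure ω = ∫ u in Ico 0 1, f u * ω u := by
  rw [weightMeasure, integral_withDensity_eq_integral_toReal_smul₀
    hint.aestronglyMeasurable.aemeasurable.ennreal_ofReal (by simp)]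
  refine setIntegral_congr_fun measurableSet_Ico fun u hu => ?_
  simp only [ENNReal.toReal_ofReal (hnn u hu), smul_eq_mul, mul_comm]

theorem weightMeasure_real_Ici (hnn : ∀ t ∈ Ico (0 : ℝ) 1, 0 ≤ ω t)
    (hint : IntegrableOn ω (Ico (0 : ℝ) 1)) (hr : r ∈ Icc (0 : ℝ) 1) :
    (weightMeasure ω).real (Ici r) = tl ω r := by
  have inter_eq : Ico 0 1 ∩ Ici r = Ico r 1 := by
    rw [← Ici_inter_Iio, inter_right_comm, Ici_inter_Ici, sup_eq_right.2 hr.1, Ici_inter_Iio]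
  calc (weightMeasure ω).real (Ici r) = ∫ u in Ico 0 1, (Ici r).indicator 1 u * ω u := by
        rw [← integral_weightMeasure hnn hint, integral_indicator_one measurableSet_Ici]
    _ = ∫ u in Ico 0 1, (Ici r).indicator ω u := by
        simp only [← indicator_mul_left, Pi.one_apply, one_mul]
    _ = tl ω r := by
        rw [setIntegral_indicator measurableSet_Ici, inter_eq, integral_Ico_eq_integral_Ioc, tl,
          intervalIntegral.integral_of_le hr.2]

theorem integral_rpow_weightMeasure (hnn : ∀ t ∈ Ico (0 : ℝ) 1, 0 ≤ ω t)
    (hint : IntegrableOn ω (Ico (0 : ℝ) 1)) (q : ℝ) :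
    ∫ u, u ^ q ∂weightMeasure ω = momR ω q := by
  rw [integral_weightMeasure hnn hint, momR, intervalIntegral.integral_of_le zero_le_one,
    integral_Ico_eq_integral_Ioc]

theorem antitoneOn_tl (hnn : ∀ t ∈ Ico (0 : ℝ) 1, 0 ≤ ω t)
    (hint : IntegrableOn ω (Ico (0 : ℝ) 1)) : AntitoneOn (tl ω) (Icc 0 1) := by
  have := isFiniteMeasure_weightMeasure hint
  intro x hx y hy hxy
  rw [← weightMeasure_real_Ici hnn hint hx, ← weightMeasure_real_Ici hnn hint hy]
  exact measureReal_mono (Ici_subset_Ici.2 hxy)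

theorem rpow_mul_tl_le_momR (hnn : ∀ t ∈ Ico (0 : ℝ) 1, 0 ≤ ω t)
    (hint : IntegrableOn ω (Ico (0 : ℝ) 1)) (hq : 0 ≤ q) (hr : r ∈ Icc (0 : ℝ) 1) :
    r ^ q * tl ω r ≤ momR ω q := by
  have := isFiniteMeasure_weightMeasure hint
  rw [← weightMeasure_real_Ici hnn hint hr, ← integral_rpow_weightMeasure hnn hint]
  exact rpow_mul_measureReal_Ici_le_integral_rpow (ae_weightMeasure_mem_Ico ω) hq hr.1

theorem momR_anti (hnn : ∀ t ∈ Ico (0 : ℝ) 1, 0 ≤ ω t)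
    (hint : IntegrableOn ω (Ico (0 : ℝ) 1)) {p : ℝ} (hp : 0 ≤ p) (hpq : p ≤ q) :
    momR ω q ≤ momR ω p := by
  have := isFiniteMeasure_weightMeasure hint
  rw [← integral_rpow_weightMeasure hnn hint, ← integral_rpow_weightMeasure hnn hint]
  exact integral_rpow_anti (ae_weightMeasure_mem_Ico ω) hp hpq

theorem momR_zero (ω : ℝ → ℝ) : momR ω 0 = tl ω 0 := by
  simp only [momR, tl, Real.rpow_zero, one_mul]

end WeightMeasure

section MonotoneMeans

variable {f : ℝ → ℝ} {s t y : ℝ}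

theorem intervalIntegrable_comp_mul_left_of_monotoneOn (hf : MonotoneOn f (Ico 0 1))
    (hs : s ∈ Ico (0 : ℝ) 1) (ht : t ∈ Icc (0 : ℝ) 1) :
    IntervalIntegrable (fun x => f (s * x)) volume 0 t := by
  have mem_Ico {x : ℝ} (hx : x ∈ Icc 0 t) : s * x ∈ Ico (0 : ℝ) 1 :=
    ⟨mul_nonneg hs.1 hx.1, mul_lt_one_of_nonneg_of_lt_one_left hs.1 hs.2 (hx.2.trans ht.2)⟩
  refine MonotoneOn.intervalIntegrable ?_
  rw [uIcc_of_le ht.1]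
  exact fun x hx z hz hxz => hf (mem_Ico hx) (mem_Ico hz) (mul_le_mul_of_nonneg_left hxz hs.1)

theorem integral_comp_mul_left_mem_Icc_of_monotoneOn (hf : MonotoneOn f (Ico 0 1))
    (hy : y ∈ Ico (0 : ℝ) 1) : ∫ u in (0 : ℝ)..1, f (y * u) ∈ Icc (f 0) (f y) := by
  have integrable := intervalIntegrable_comp_mul_left_of_monotoneOn hf hy ⟨zero_le_one, le_rfl⟩
  have mem_Icc {u : ℝ} (hu : u ∈ Icc (0 : ℝ) 1) : y * u ∈ Icc 0 y :=
    ⟨mul_nonneg hy.1 hu.1, mul_le_of_le_one_right hy.1 hu.2⟩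
  have mem_Ico {u : ℝ} (hu : u ∈ Icc (0 : ℝ) 1) : y * u ∈ Ico (0 : ℝ) 1 :=
    ⟨(mem_Icc hu).1, (mem_Icc hu).2.trans_lt hy.2⟩
  constructor
  · simpa using intervalIntegral.integral_mono_on zero_le_one
      (intervalIntegrable_const (c := f 0)) integrable
      fun u hu => hf ⟨le_rfl, zero_lt_one⟩ (mem_Ico hu) (mem_Icc hu).1
  · simpa using intervalIntegral.integral_mono_on zero_le_one integrable
      (intervalIntegrable_const (c := f y)) fun u hu => hf (mem_Ico hu) hy (mem_Icc hu).2

theorem integral_eq_mul_integral_comp_mul_left (f : ℝ → ℝ) (y : ℝ) :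
    ∫ x in (0 : ℝ)..y, f x = y * ∫ u in (0 : ℝ)..1, f (y * u) := by
  rw [intervalIntegral.mul_integral_comp_mul_left, mul_zero, mul_one]

theorem mul_one_add_integral_le_integral_comp_mul_left (hf : MonotoneOn f (Ico 0 1))
    (hf0 : 0 ≤ f 0) (hy : y ∈ Ico (0 : ℝ) 1) :
    min 1 (f 0) / 2 * (1 + ∫ x in (0 : ℝ)..y, f x) ≤ ∫ u in (0 : ℝ)..1, f (y * u) := by
  obtain ⟨f_zero_le, -⟩ := integral_comp_mul_left_mem_Icc_of_monotoneOn hf hy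
  rw [integral_eq_mul_integral_comp_mul_left]
  set A := ∫ u in (0 : ℝ)..1, f (y * u)
  have hA : 0 ≤ A := hf0.trans f_zero_le
  calc min 1 (f 0) / 2 * (1 + y * A) = min 1 (f 0) / 2 + min 1 (f 0) / 2 * (y * A) := by ring
    _ ≤ f 0 / 2 + 1 / 2 * (1 * A) := by
        gcongr
        · exact min_le_right _ _
        · exact mul_nonneg hy.1 hA
        · exact min_le_left _ _
        · exact hy.2.le
    _ ≤ A := by linarith

theorem integral_comp_mul_left_le_mul_one_add_integral (hf : MonotoneOn f (Ico 0 1))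
    (hf0 : 0 ≤ f 0) (hy : y ∈ Ico (0 : ℝ) 1) :
    ∫ u in (0 : ℝ)..1, f (y * u) ≤ max 2 (f (1 / 2)) * (1 + ∫ x in (0 : ℝ)..y, f x) := by
  obtain ⟨f_zero_le, le_f_y⟩ := integral_comp_mul_left_mem_Icc_of_monotoneOn hf hy
  rw [integral_eq_mul_integral_comp_mul_left f y]
  set A := ∫ u in (0 : ℝ)..1, f (y * u)
  have hA : 0 ≤ A := hf0.trans f_zero_le
  have hyA : 0 ≤ y * A := mul_nonneg hy.1 hA
  rcases le_total (1 / 2) y with half_le | le_half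
  · calc A ≤ 2 * (1 + y * A) := by nlinarith
      _ ≤ max 2 (f (1 / 2)) * (1 + y * A) := by gcongr; exact le_max_left _ _
  · calc A ≤ f (1 / 2) := le_f_y.trans (hf hy (by norm_num) le_half)
      _ ≤ max 2 (f (1 / 2)) := le_max_right _ _
      _ ≤ max 2 (f (1 / 2)) * (1 + y * A) :=
          le_mul_of_one_le_right (by positivity) (by linarith)

end MonotoneMeans

theorem div_sq_three_add_div_four_le {x : ℝ} (hx : x ∈ Icc (0 : ℝ) 1) :
    x / ((3 + x) / 4) ^ 2 ≤ 1 - (1 - x) / 2 := by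
  obtain ⟨hx0, hx1⟩ := hx
  rw [div_le_iff₀ (by positivity)]
  have : 0 ≤ x * (1 - x) := mul_nonneg hx0 (sub_nonneg.2 hx1)
  nlinarith [mul_nonneg this hx0]

/-- The power series `∑ yⁿ / (2 ω_{2n+1})`, so that `B^ω_s(x) = bergmanSeries ω (s * x)`. -/
noncomputable def bergmanSeries (ω : ℝ → ℝ) (y : ℝ) : ℝ :=
  ∑' n : ℕ, y ^ n / (2 * momR ω (2 * n + 1))

/-- The integrand `1 / (ŵ(x) (1 - x))` of the theorem, which `bergmanSeries ω` is comparable to. -/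
noncomputable def tailDensity (ω : ℝ → ℝ) (x : ℝ) : ℝ :=
  1 / (tl ω x * (1 - x))

/-- `ω` is a radial weight in the class `D̂`, with doubling constant `C`. As in the theory
of these weights, the tail is required to be positive, so that all moments are nonzero. -/
structure UpperDoublingWeight (ω : ℝ → ℝ) (C : ℝ) : Prop where
  nonneg : ∀ r ∈ Ico (0 : ℝ) 1, 0 ≤ ω r
  integrableOn : IntegrableOn ω (Ico (0 : ℝ) 1)
  tl_pos : ∀ r ∈ Ico (0 : ℝ) 1, 0 < tl ω r
  one_le : 1 ≤ C
  tl_le : ∀ r ∈ Ico (0 : ℝ) 1, tl ω r ≤ C * tl ω ((1 + r) / 2)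

namespace UpperDoublingWeight

variable {ω : ℝ → ℝ} {C p q r s t x : ℝ}

theorem const_pos (h : UpperDoublingWeight ω C) : 0 < C :=
  zero_lt_one.trans_le h.one_le

theorem momR_pos (h : UpperDoublingWeight ω C) (hq : 0 ≤ q) : 0 < momR ω q :=
  calc 0 < (1 / 2 : ℝ) ^ q * tl ω (1 / 2) := by
        have := h.tl_pos (1 / 2) (by norm_num)
        positivity
    _ ≤ momR ω q := rpow_mul_tl_le_momR h.nonneg h.integrableOn hq (by norm_num)

theorem momR_le_two_mul_tl (h : UpperDoublingWeight ω C) (hx : x ∈ Ico (0 : ℝ) 1) (hp : 0 < p)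
    (hpq : 2 * p ≤ q) (hxp : C * x ^ p ≤ 1 / 2) : momR ω q ≤ 2 * tl ω x := by
  have := isFiniteMeasure_weightMeasure h.integrableOn
  have real_Ici {r : ℝ} (hr : r ∈ Icc (0 : ℝ) 1) :=
    weightMeasure_real_Ici h.nonneg h.integrableOn hr
  have doubling (r : ℝ) (hr : r ∈ Ico (0 : ℝ) 1) :
      (weightMeasure ω).real (Ici r) ≤ C * (weightMeasure ω).real (Ici ((1 + r) / 2)) := by
    rw [real_Ici ⟨hr.1, hr.2.le⟩, real_Ici ⟨by linarith [hr.1], by linarith [hr.2]⟩]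
    exact h.tl_le r hr
  calc momR ω q ≤ momR ω (2 * p) := momR_anti h.nonneg h.integrableOn (by positivity) hpq
    _ ≤ 2 * tl ω x := by
        rw [← integral_rpow_weightMeasure h.nonneg h.integrableOn, ← real_Ici ⟨hx.1, hx.2.le⟩]
        exact integral_rpow_two_mul_le_two_mul_measureReal_Ici (ae_weightMeasure_mem_Ico ω) hp
          h.const_pos.le doubling hx.1 hxp

theorem tl_le_sq_mul_tl (h : UpperDoublingWeight ω C) (hx : x ∈ Ico (0 : ℝ) 1) :
    tl ω x ≤ C ^ 2 * tl ω ((3 + x) / 4) :=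
  calc tl ω x ≤ C * tl ω ((1 + x) / 2) := h.tl_le x hx
    _ ≤ C * (C * tl ω ((1 + (1 + x) / 2) / 2)) := by
        gcongr
        · exact h.const_pos.le
        · exact h.tl_le _ ⟨by linarith [hx.1], by linarith [hx.2]⟩
    _ = C ^ 2 * tl ω ((3 + x) / 4) := by ring_nf

theorem tailDensity_pos (h : UpperDoublingWeight ω C) (hx : x ∈ Ico (0 : ℝ) 1) :
    0 < tailDensity ω x :=
  one_div_pos.2 (mul_pos (h.tl_pos x hx) (sub_pos.2 hx.2))

theorem monotoneOn_tailDensity (h : UpperDoublingWeight ω C) :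
    MonotoneOn (tailDensity ω) (Ico 0 1) := by
  intro x hx y hy hxy
  have tl_le : tl ω y ≤ tl ω x :=
    antitoneOn_tl h.nonneg h.integrableOn ⟨hx.1, hx.2.le⟩ ⟨hy.1, hy.2.le⟩ hxy
  refine one_div_le_one_div_of_le (mul_pos (h.tl_pos y hy) (sub_pos.2 hy.2)) ?_
  exact mul_le_mul tl_le (by linarith) (sub_nonneg.2 hy.2.le) (h.tl_pos x hx).le

theorem bergman_term_nonneg (h : UpperDoublingWeight ω C) (hx : 0 ≤ x) (n : ℕ) :
    0 ≤ x ^ n / (2 * momR ω (2 * n + 1)) := by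
  have := h.momR_pos (q := 2 * n + 1) (by positivity)
  positivity

theorem bergman_term_le (h : UpperDoublingWeight ω C) (hx : 0 ≤ x) (hr : r ∈ Ioo (0 : ℝ) 1)
    (n : ℕ) :
    x ^ n / (2 * momR ω (2 * n + 1)) ≤ 1 / (2 * r * tl ω r) * (x / r ^ 2) ^ n := by
  have hr0 := hr.1
  have hT : 0 < tl ω r := h.tl_pos r ⟨hr.1.le, hr.2⟩
  have le_momR : r ^ (2 * n + 1) * tl ω r ≤ momR ω (2 * n + 1) := by
    have := rpow_mul_tl_le_momR h.nonneg h.integrableOn (q := 2 * n + 1) (by positivity)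
      ⟨hr.1.le, hr.2.le⟩
    exact_mod_cast this
  calc x ^ n / (2 * momR ω (2 * n + 1)) ≤ x ^ n / (2 * (r ^ (2 * n + 1) * tl ω r)) := by gcongr
    _ = 1 / (2 * r * tl ω r) * (x / r ^ 2) ^ n := by
        rw [div_pow, ← pow_mul, pow_succ]
        field_simp

theorem summable_bergman (h : UpperDoublingWeight ω C) (hx : x ∈ Ico (0 : ℝ) 1) :
    Summable fun n : ℕ => x ^ n / (2 * momR ω (2 * n + 1)) := by
  obtain ⟨hx0, hx1⟩ := hx
  have ratio_lt_one : x / ((3 + x) / 4) ^ 2 < 1 := by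
    linarith [div_sq_three_add_div_four_le ⟨hx0, hx1.le⟩]
  exact Summable.of_nonneg_of_le (h.bergman_term_nonneg hx0)
    (h.bergman_term_le hx0 ⟨by linarith, by linarith⟩)
    ((summable_geometric_of_lt_one (by positivity) ratio_lt_one).mul_left _)

theorem monotoneOn_bergmanSeries (h : UpperDoublingWeight ω C) :
    MonotoneOn (bergmanSeries ω) (Ico 0 1) := by
  intro x hx y hy hxy
  refine (h.summable_bergman hx).tsum_le_tsum (fun n => ?_) (h.summable_bergman hy)
  have := h.momR_pos (q := 2 * n + 1) (by positivity)
  have := hx.1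
  gcongr

theorem bergmanSeries_eq_add_tsum (h : UpperDoublingWeight ω C) (hx : x ∈ Ico (0 : ℝ) 1) :
    bergmanSeries ω x =
      1 / (2 * momR ω 1) + ∑' n : ℕ, x ^ (n + 1) / (2 * momR ω (2 * n + 3)) := by
  have exponent_succ (n : ℕ) : 2 * ((n + 1 : ℕ) : ℝ) + 1 = 2 * n + 3 := by
    push_cast
    ring
  rw [bergmanSeries, (h.summable_bergman hx).tsum_eq_zero_add]
  simp only [exponent_succ, pow_zero, Nat.cast_zero, mul_zero, zero_add]

theorem bergmanSeries_le_geometric (h : UpperDoublingWeight ω C) (hx : 0 ≤ x)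
    (hr : r ∈ Ioo (0 : ℝ) 1) (hxr : x < r ^ 2) :
    bergmanSeries ω x ≤ 1 / (2 * r * tl ω r) * (1 - x / r ^ 2)⁻¹ := by
  have hxIco : x ∈ Ico (0 : ℝ) 1 := ⟨hx, hxr.trans (pow_lt_one₀ hr.1.le hr.2 two_ne_zero)⟩
  have ratio_nonneg : 0 ≤ x / r ^ 2 := by positivity
  have ratio_lt_one : x / r ^ 2 < 1 := (div_lt_one (pow_pos hr.1 2)).2 hxr
  rw [← tsum_geometric_of_lt_one ratio_nonneg ratio_lt_one, ← tsum_mul_left]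
  exact (h.summable_bergman hxIco).tsum_le_tsum (h.bergman_term_le hx hr)
    ((summable_geometric_of_lt_one ratio_nonneg ratio_lt_one).mul_left _)

theorem bergmanSeries_le_mul_tailDensity (h : UpperDoublingWeight ω C)
    (hx : x ∈ Ico (0 : ℝ) 1) : bergmanSeries ω x ≤ 4 / 3 * C ^ 2 * tailDensity ω x := by
  have tl_x_pos := h.tl_pos x hx
  have tl_le := h.tl_le_sq_mul_tl hx
  have ratio_le := div_sq_three_add_div_four_le ⟨hx.1, hx.2.le⟩
  obtain ⟨hx0, hx1⟩ := hx
  have : 0 < 1 - x := sub_pos.2 hx1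
  -- Two doubling steps are needed: for `r = (1 + x) / 2` the gap `1 - x / r ^ 2` would only be
  -- of order `(1 - x) ^ 2`.
  set r := (3 + x) / 4 with hr
  have hrIoo : r ∈ Ioo (0 : ℝ) 1 := ⟨by linarith, by linarith⟩
  have tl_r_pos := h.tl_pos r ⟨hrIoo.1.le, hrIoo.2⟩
  have ratio_lt_one : x / r ^ 2 < 1 := by linarith
  have geometric_le : (1 - x / r ^ 2)⁻¹ ≤ 2 / (1 - x) := by
    rw [inv_le_comm₀ (by linarith) (by positivity), inv_div]
    linarith
  have coeff_le : 1 / (2 * r * tl ω r) ≤ 2 / 3 * C ^ 2 / tl ω x := by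
    rw [div_le_div_iff₀ (by positivity) tl_x_pos]
    nlinarith [mul_pos (pow_pos h.const_pos 2) tl_r_pos]
  calc bergmanSeries ω x ≤ 1 / (2 * r * tl ω r) * (1 - x / r ^ 2)⁻¹ :=
        h.bergmanSeries_le_geometric hx0 hrIoo ((div_lt_one (by positivity)).1 ratio_lt_one)
    _ ≤ 2 / 3 * C ^ 2 / tl ω x * (2 / (1 - x)) := by gcongr
    _ = 4 / 3 * C ^ 2 * tailDensity ω x := by
        rw [tailDensity]
        field_simp
        ring

theorem pow_div_le_bergmanSeries (h : UpperDoublingWeight ω C) (hx : x ∈ Ico (0 : ℝ) 1) {N : ℕ}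
    (hN : N ≠ 0) (hxN : C * x ^ N ≤ 1 / 2) :
    x ^ N / (4 * tl ω x) * (1 - x)⁻¹ ≤ bergmanSeries ω x := by
  have late_term_le (n : ℕ) : x ^ N / (4 * tl ω x) * x ^ n ≤
      x ^ (n + N) / (2 * momR ω (2 * (n + N : ℕ) + 1)) := by
    have momR_le : momR ω (2 * (n + N : ℕ) + 1) ≤ 2 * tl ω x := by
      refine h.momR_le_two_mul_tl (p := N) hx (by positivity) ?_ (by simpa using hxN)
      push_cast
      linarith [(n.cast_nonneg : (0 : ℝ) ≤ n)]
    have momR_pos := h.momR_pos (q := 2 * (n + N : ℕ) + 1) (by positivity)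
    have hx0 := hx.1
    calc x ^ N / (4 * tl ω x) * x ^ n = x ^ (n + N) / (2 * (2 * tl ω x)) := by ring
      _ ≤ x ^ (n + N) / (2 * momR ω (2 * (n + N : ℕ) + 1)) := by gcongr
  calc x ^ N / (4 * tl ω x) * (1 - x)⁻¹ = ∑' n : ℕ, x ^ N / (4 * tl ω x) * x ^ n := by
        rw [tsum_mul_left, tsum_geometric_of_lt_one hx.1 hx.2]
    _ ≤ ∑' n : ℕ, x ^ (n + N) / (2 * momR ω (2 * (n + N : ℕ) + 1)) :=
        Summable.tsum_le_tsum late_term_le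
          ((summable_geometric_of_lt_one hx.1 hx.2).mul_left _)
          ((summable_nat_add_iff N).2 (h.summable_bergman hx))
    _ ≤ bergmanSeries ω x := by
        rw [bergmanSeries, ← (h.summable_bergman hx).sum_add_tsum_nat_add N]
        exact le_add_of_nonneg_left
          (Finset.sum_nonneg fun n _ => h.bergman_term_nonneg hx.1 n)

theorem mul_tailDensity_le_bergmanSeries_of_half_le (h : UpperDoublingWeight ω C)
    (hx : x ∈ Ico (1 / 2 : ℝ) 1) :
    1 / (16 * C) * tailDensity ω x ≤ bergmanSeries ω x := by
  have hxIco : x ∈ Ico (0 : ℝ) 1 := ⟨by linarith [hx.1], hx.2⟩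
  have hC := h.const_pos
  have tl_x_pos := h.tl_pos x hxIco
  have one_sub_pos : 0 < 1 - x := sub_pos.2 hx.2
  obtain ⟨k, pow_succ_lt, le_pow⟩ : ∃ k : ℕ, x ^ (k + 1) < 1 / (2 * C) ∧ 1 / (2 * C) ≤ x ^ k :=
    exists_nat_pow_near_of_lt_one (by positivity)
      ((div_le_one (by positivity)).2 (by linarith [h.one_le])) (by linarith [hx.1]) hx.2
  have mul_pow_le : C * x ^ (k + 1) ≤ 1 / 2 := by
    rw [lt_div_iff₀ (by positivity)] at pow_succ_lt
    linarith
  calc 1 / (16 * C) * tailDensity ω x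
      = 1 / (2 * C) * (1 / 2) / (4 * tl ω x) * (1 - x)⁻¹ := by
        rw [tailDensity]
        field_simp
        norm_num
    _ ≤ x ^ k * x / (4 * tl ω x) * (1 - x)⁻¹ := by
        gcongr
        · exact pow_nonneg hxIco.1 k
        · exact hx.1
    _ ≤ bergmanSeries ω x := by
        rw [← pow_succ]
        exact h.pow_div_le_bergmanSeries hxIco k.succ_ne_zero mul_pow_le

theorem mul_tailDensity_le_bergmanSeries_of_le_half (h : UpperDoublingWeight ω C)
    (hx : x ∈ Icc (0 : ℝ) (1 / 2)) :
    1 / (4 * C) * tailDensity ω x ≤ bergmanSeries ω x := by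
  have hC := h.const_pos
  have zero_mem : (0 : ℝ) ∈ Ico (0 : ℝ) 1 := by norm_num
  have half_mem : (1 / 2 : ℝ) ∈ Ico (0 : ℝ) 1 := by norm_num
  have hxIco : x ∈ Ico (0 : ℝ) 1 := ⟨hx.1, by linarith [hx.2]⟩
  have tl_half_pos := h.tl_pos _ half_mem
  have momR_pos := h.momR_pos (zero_le_one' ℝ)
  have momR_one_le : momR ω 1 ≤ C * tl ω (1 / 2) :=
    calc momR ω 1 ≤ momR ω 0 := momR_anti h.nonneg h.integrableOn le_rfl zero_le_one
      _ = tl ω 0 := momR_zero ω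
      _ ≤ C * tl ω (1 / 2) := by simpa using h.tl_le 0 zero_mem
  calc 1 / (4 * C) * tailDensity ω x ≤ 1 / (4 * C) * tailDensity ω (1 / 2) := by
        gcongr
        exact h.monotoneOn_tailDensity hxIco half_mem hx.2
    _ = 1 / (2 * (C * tl ω (1 / 2))) := by
        rw [tailDensity]
        field_simp
        norm_num
    _ ≤ 1 / (2 * momR ω 1) := by gcongr
    _ = bergmanSeries ω 0 := by simp [h.bergmanSeries_eq_add_tsum zero_mem]
    _ ≤ bergmanSeries ω x := h.monotoneOn_bergmanSeries zero_mem hxIco hx.1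

theorem mul_tailDensity_le_bergmanSeries (h : UpperDoublingWeight ω C) (hx : x ∈ Ico (0 : ℝ) 1) :
    1 / (16 * C) * tailDensity ω x ≤ bergmanSeries ω x := by
  rcases le_total (1 / 2) x with half_le | le_half
  · exact h.mul_tailDensity_le_bergmanSeries_of_half_le ⟨half_le, hx.2⟩
  · refine le_trans ?_ (h.mul_tailDensity_le_bergmanSeries_of_le_half ⟨hx.1, le_half⟩)
    have := h.const_pos
    have := h.tailDensity_pos hx
    gcongr
    norm_num

theorem Kker_eq_integral (h : UpperDoublingWeight ω C) (hs : s ∈ Ico (0 : ℝ) 1)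
    (ht : t ∈ Ico (0 : ℝ) 1) :
    Kker ω s t = ∫ u in (0 : ℝ)..1, bergmanSeries ω (s * t * u) := by
  rcases eq_or_ne t 0 with rfl | ht0
  · simp [Kker, h.bergmanSeries_eq_add_tsum (x := 0) (by norm_num)]
  have series_eq {x : ℝ} (hx : x ∈ uIcc 0 t) :
      ∑' n : ℕ, (s ^ (n + 1) * x ^ (n + 1)) / (2 * momR ω (2 * n + 3)) =
        bergmanSeries ω (s * x) - 1 / (2 * momR ω 1) := by
    rw [uIcc_of_le ht.1] at hx
    have mem_Ico : s * x ∈ Ico (0 : ℝ) 1 := ⟨mul_nonneg hs.1 hx.1,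
      mul_lt_one_of_nonneg_of_lt_one_left hs.1 hs.2 (hx.2.trans ht.2.le)⟩
    simp only [h.bergmanSeries_eq_add_tsum mem_Ico, mul_pow, add_sub_cancel_left]
  have integrable : IntervalIntegrable (fun x => bergmanSeries ω (s * x)) volume 0 t :=
    intervalIntegrable_comp_mul_left_of_monotoneOn h.monotoneOn_bergmanSeries hs ⟨ht.1, ht.2.le⟩
  calc Kker ω s t = 1 / (2 * momR ω 1) +
        1 / t * ∫ x in (0 : ℝ)..t, (bergmanSeries ω (s * x) - 1 / (2 * momR ω 1)) := by
        rw [Kker, if_neg ht0, intervalIntegral.integral_congr fun x hx => series_eq hx]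
    _ = 1 / t * ∫ x in (0 : ℝ)..t, bergmanSeries ω (s * x) := by
        rw [intervalIntegral.integral_sub integrable intervalIntegrable_const,
          intervalIntegral.integral_const, smul_eq_mul]
        field_simp
        ring
    _ = ∫ u in (0 : ℝ)..1, bergmanSeries ω (s * t * u) := by
        simp only [integral_eq_mul_integral_comp_mul_left _ t, mul_assoc]
        field_simp

theorem integral_bergmanSeries_mem_Icc (h : UpperDoublingWeight ω C) {y : ℝ}
    (hy : y ∈ Ico (0 : ℝ) 1) :
    ∫ u in (0 : ℝ)..1, bergmanSeries ω (y * u) ∈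
      Icc (1 / (16 * C) * ∫ u in (0 : ℝ)..1, tailDensity ω (y * u))
        (4 / 3 * C ^ 2 * ∫ u in (0 : ℝ)..1, tailDensity ω (y * u)) := by
  have integrable_series := intervalIntegrable_comp_mul_left_of_monotoneOn
    h.monotoneOn_bergmanSeries hy ⟨zero_le_one, le_rfl⟩
  have integrable_density := intervalIntegrable_comp_mul_left_of_monotoneOn
    h.monotoneOn_tailDensity hy ⟨zero_le_one, le_rfl⟩
  have mem_Ico {u : ℝ} (hu : u ∈ Icc (0 : ℝ) 1) : y * u ∈ Ico (0 : ℝ) 1 :=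
    ⟨mul_nonneg hy.1 hu.1, mul_lt_one_of_nonneg_of_lt_one_left hy.1 hy.2 hu.2⟩
  simp only [← intervalIntegral.integral_const_mul]
  exact ⟨intervalIntegral.integral_mono_on zero_le_one (integrable_density.const_mul _)
      integrable_series fun u hu => h.mul_tailDensity_le_bergmanSeries (mem_Ico hu),
    intervalIntegral.integral_mono_on zero_le_one integrable_series
      (integrable_density.const_mul _) fun u hu => h.bergmanSeries_le_mul_tailDensity (mem_Ico hu)⟩

end UpperDoublingWeight

theorem stmt4 (ω : ℝ → ℝ)
    (hnn : ∀ t ∈ Ico (0:ℝ) 1, 0 ≤ ω t)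
    (hint : IntegrableOn ω (Ico (0:ℝ) 1))
    (hpos : ∀ r ∈ Ico (0:ℝ) 1, 0 < tl ω r)
    (C : ℝ) (hC : 1 ≤ C)
    (hdbl : ∀ r ∈ Ico (0:ℝ) 1, tl ω r ≤ C * tl ω ((1 + r) / 2)) :
    ∃ c₁ > (0:ℝ), ∃ c₂ > (0:ℝ), ∀ s t : ℝ, 0 ≤ s → s < 1 → 0 ≤ t → t < 1 →
      c₁ * (1 + ∫ x in (0:ℝ)..(s*t), 1 / (tl ω x * (1 - x))) ≤ Kker ω s t ∧
      Kker ω s t ≤ c₂ * (1 + ∫ x in (0:ℝ)..(s*t), 1 / (tl ω x * (1 - x))) := by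
  have h : UpperDoublingWeight ω C := ⟨hnn, hint, hpos, hC, hdbl⟩
  have : 0 < C := h.const_pos
  have density_zero_pos : 0 < tailDensity ω 0 := h.tailDensity_pos (by norm_num)
  refine ⟨1 / (16 * C) * (min 1 (tailDensity ω 0) / 2), by positivity,
    4 / 3 * C ^ 2 * max 2 (tailDensity ω (1 / 2)), by positivity, fun s t hs0 hs1 ht0 ht1 => ?_⟩
  have hst : s * t ∈ Ico (0 : ℝ) 1 :=
    ⟨mul_nonneg hs0 ht0, mul_lt_one_of_nonneg_of_lt_one_left hs0 hs1 ht1.le⟩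
  obtain ⟨le_series, series_le⟩ := h.integral_bergmanSeries_mem_Icc hst
  rw [h.Kker_eq_integral ⟨hs0, hs1⟩ ⟨ht0, ht1⟩, mul_assoc, mul_assoc]
  constructor
  · refine le_trans ?_ le_series
    gcongr
    exact mul_one_add_integral_le_integral_comp_mul_left h.monotoneOn_tailDensity
      density_zero_pos.le hst
  · refine series_le.trans ?_
    gcongr
    exact integral_comp_mul_left_le_mul_one_add_integral h.monotoneOn_tailDensity
      density_zero_pos.le hst
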